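/- There exist dimensions m and n, a density matrix ρ_AB on ℂ^m ⊗ ℂ^n that is not separable, positive semidefinite n×n matrices E_{t,b} (t ∈ {1,2,3}, b ∈ {0,1}) with (E_{t,0} + E_{t,1})/2 equal to one fixed matrix E_* for all t, and positive semidefinite m×m matrices M_{t,b} with M_{t,0} + M_{t,1} = I_A for each t and (1/3) ∑_{t=1}^3 M_{t,b} = I_A/2 for each b, such that ∑_{t=1}^3 ∑_{b=0}^1 Tr[(M_{t,b} ⊗ E_{t,b}) ρ_AB] > 5 Tr[(I_A ⊗ E_*) ρ_AB]. -/

import Mathlib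

open Matrix
open scoped Kronecker ComplexOrder BigOperators

noncomputable section

/-- A density matrix: positive semidefinite with trace 1. -/
def IsDensity {d : Type*} [Fintype d] [DecidableEq d] (ρ : Matrix d d ℂ) : Prop :=
  ρ.PosSemidef ∧ ρ.trace = 1

/-- Partial trace over the second (B) factor. -/
def trB {m n : ℕ} (ρ : Matrix (Fin m × Fin n) (Fin m × Fin n) ℂ) :
    Matrix (Fin m) (Fin m) ℂ := fun i j => ∑ k, ρ (i, k) (j, k)

/-- Partial trace over the first (A) factor. -/
def trA {m n : ℕ} (ρ : Matrix (Fin m × Fin n) (Fin m × Fin n) ℂ) :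
    Matrix (Fin n) (Fin n) ℂ := fun k l => ∑ i, ρ (i, k) (i, l)

/-- The set of states remotely preparable on Alice's side. -/
def LambdaA {m n : ℕ} (ρ : Matrix (Fin m × Fin n) (Fin m × Fin n) ℂ) :
    Set (Matrix (Fin m) (Fin m) ℂ) :=
  {σ | IsDensity σ ∧ ∃ E : Matrix (Fin n) (Fin n) ℂ, E.PosSemidef ∧
    σ = trB (((1 : Matrix (Fin m) (Fin m) ℂ) ⊗ₖ E) * ρ)}

/-- The set of states remotely preparable on Bob's side. -/
def LambdaB {m n : ℕ} (ρ : Matrix (Fin m × Fin n) (Fin m × Fin n) ℂ) :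
    Set (Matrix (Fin n) (Fin n) ℂ) :=
  {σ | IsDensity σ ∧ ∃ E : Matrix (Fin m) (Fin m) ℂ, E.PosSemidef ∧
    σ = trA ((E ⊗ₖ (1 : Matrix (Fin n) (Fin n) ℂ)) * ρ)}

/-- A preparation-and-measurement noncontextual model for a set `K` of density matrices. -/
def HasNCModel {d : ℕ} (K : Set (Matrix (Fin d) (Fin d) ℂ)) : Prop :=
  ∃ (L : ℕ) (N ω : Fin L → Matrix (Fin d) (Fin d) ℂ),
    (∀ l, (N l).IsHermitian) ∧ (∀ l, IsDensity (ω l)) ∧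
    (∀ ρ ∈ K, ∀ l, 0 ≤ (ρ * N l).trace) ∧
    (∀ ρ ∈ K, ∑ l, (ρ * N l).trace = 1) ∧
    (∀ ρ ∈ K, ∀ M : Matrix (Fin d) (Fin d) ℂ, M.PosSemidef → (1 - M).PosSemidef →
      (ρ * M).trace = ∑ l, (ρ * N l).trace * (ω l * M).trace)

/-- Separability of a bipartite density matrix. -/
def Separable {m n : ℕ} (ρ : Matrix (Fin m × Fin n) (Fin m × Fin n) ℂ) : Prop :=
  ∃ (L : ℕ) (ω : Fin L → Matrix (Fin m) (Fin m) ℂ)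
    (κ : Fin L → Matrix (Fin n) (Fin n) ℂ),
    (∀ l, IsDensity (ω l)) ∧ (∀ l, (κ l).PosSemidef) ∧ ρ = ∑ l, ω l ⊗ₖ κ l

/-!
On a product state the witness is `∑ t b, p t b * q t b` with `p t 0 + p t 1 = 1` and
`q t 0 + q t 1 = 2 s`, where `s` is the reference value `Tr[(1 ⊗ Es) ρ]`; hence it is at most
`2 s ∑ t, max (p t 0) (p t 1)`. As the number `N` of settings is odd, one of the two outcomes is the
likelier one for at most `(N - 1) / 2` settings. There `max ≤ 1`, elsewhere the maximum is attained
by the other outcome, whose probabilities add up to `N / 2`, so that `∑ t, max ≤ N - 1 / 2` and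
separable states satisfy the bound `2 N - 1` (which is `5` for `N = 3`).

On the maximally entangled state, a real rank-one projection `P` satisfies `Tr[(P ⊗ P) ρ] = 1 / 2`.
With all `2 N` effects of this kind the witness equals `N`, which exceeds the bound `(2 N - 1) / 2`.
The violation is therefore itself the proof that this state is entangled.
-/

section Trace

variable {m n R : Type*} [Fintype m] [Fintype n] [CommSemiring R]

lemma trace_kronecker_mul_kronecker (A C : Matrix m m R) (B D : Matrix n n R) :
    ((A ⊗ₖ B) * (C ⊗ₖ D)).trace = (A * C).trace * (B * D).trace := by
  rw [← mul_kronecker_mul, trace_kronecker]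

lemma star_vec_one_dotProduct_kronecker_mulVec [DecidableEq n] [StarRing R]
    (A B : Matrix n n R) : star (vec 1) ⬝ᵥ (A ⊗ₖ B) *ᵥ vec 1 = (B * Aᵀ).trace := by
  rw [kronecker_mulVec_vec, star_vec_dotProduct_vec, conjTranspose_one, Matrix.one_mul,
    Matrix.mul_one]

lemma trace_mul_nonneg_of_posSemidef {𝕜 : Type*} [RCLike 𝕜] {A B : Matrix n n 𝕜}
    (hA : A.PosSemidef) (hB : B.PosSemidef) : 0 ≤ (A * B).trace := by
  classical
  have h := (hB.transpose.kronecker hA).dotProduct_mulVec_nonneg (vec 1)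
  rwa [star_vec_one_dotProduct_kronecker_mulVec, transpose_transpose] at h

lemma exists_nonneg_ofReal_eq_trace_mul {A B : Matrix n n ℂ} (hA : A.PosSemidef)
    (hB : B.PosSemidef) : ∃ x : ℝ, 0 ≤ x ∧ (x : ℂ) = (A * B).trace :=
  RCLike.nonneg_iff_exists_ofReal.mp (trace_mul_nonneg_of_posSemidef hA hB)

end Trace

section SeparableBound

variable {ι : Type*} [Fintype ι]

section Scalar

variable {R : Type*} [Field R] [LinearOrder R] [IsStrictOrderedRing R]

lemma sum_max_le_card_add_sum {p p' : ι → R} {S : Finset ι} (hp : ∀ i, p i ≤ 1)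
    (hp' : ∀ i, 0 ≤ p' i) (hS : ∀ i ∉ S, p i ≤ p' i) :
    ∑ i, max (p i) (p' i) ≤ S.card + ∑ i, p' i := by
  classical
  calc ∑ i, max (p i) (p' i) ≤ ∑ i, ((if i ∈ S then 1 else 0) + p' i) := by
        refine Finset.sum_le_sum fun i _ => ?_
        split_ifs with hi
        · exact max_le ((hp i).trans (le_add_of_nonneg_right (hp' i)))
            (le_add_of_nonneg_left zero_le_one)
        · rw [_root_.zero_add, max_eq_right (hS i hi)]
    _ = S.card + ∑ i, p' i := by simp [Finset.sum_add_distrib]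

lemma sum_max_le_card_sub_half (hι : Odd (Fintype.card ι)) {p : ι → Fin 2 → R}
    (hp : ∀ i b, 0 ≤ p i b) (hadd : ∀ i, p i 0 + p i 1 = 1)
    (hsum : ∀ b, ∑ i, p i b = Fintype.card ι / 2) :
    ∑ i, max (p i 0) (p i 1) ≤ Fintype.card ι - 1 / 2 := by
  classical
  let S : Finset ι := {i | p i 1 < p i 0}
  have h₀ : ∑ i, max (p i 0) (p i 1) ≤ S.card + (Fintype.card ι / 2 : R) :=
    hsum 1 ▸ sum_max_le_card_add_sum (fun i => by linarith [hp i 1, hadd i]) (hp · 1)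
      (by simp [S])
  have h₁ : ∑ i, max (p i 0) (p i 1) ≤ Sᶜ.card + (Fintype.card ι / 2 : R) := by
    simp_rw [max_comm (p _ 0), ← hsum 0]
    exact sum_max_le_card_add_sum (fun i => by linarith [hp i 0, hadd i]) (hp · 0)
      (by simp +contextual [S, le_of_lt])
  obtain ⟨k, hk⟩ := hι
  have hcard : S.card + Sᶜ.card = 2 * k + 1 := hk ▸ S.card_add_card_compl
  have hkR : (Fintype.card ι : R) = 2 * k + 1 := by exact_mod_cast hk
  rcases (show S.card ≤ k ∨ Sᶜ.card ≤ k by lia) with h | h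
  · have : (S.card : R) ≤ k := by exact_mod_cast h
    linarith
  · have : (Sᶜ.card : R) ≤ k := by exact_mod_cast h
    linarith

lemma sum_sum_mul_le (hι : Odd (Fintype.card ι)) {p q : ι → Fin 2 → R} {s : R}
    (hp : ∀ i b, 0 ≤ p i b) (hpadd : ∀ i, p i 0 + p i 1 = 1)
    (hpsum : ∀ b, ∑ i, p i b = Fintype.card ι / 2)
    (hq : ∀ i b, 0 ≤ q i b) (hqadd : ∀ i, q i 0 + q i 1 = s) :
    ∑ i, ∑ b, p i b * q i b ≤ (Fintype.card ι - 1 / 2) * s := by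
  obtain ⟨i₀⟩ : Nonempty ι := Fintype.card_pos_iff.mp hι.pos
  have hs : 0 ≤ s := hqadd i₀ ▸ add_nonneg (hq i₀ 0) (hq i₀ 1)
  calc ∑ i, ∑ b, p i b * q i b
      ≤ ∑ i, max (p i 0) (p i 1) * s := by
        refine Finset.sum_le_sum fun i _ => ?_
        rw [Fin.sum_univ_two, ← hqadd i, mul_add]
        exact add_le_add (mul_le_mul_of_nonneg_right (le_max_left _ _) (hq i 0))
          (mul_le_mul_of_nonneg_right (le_max_right _ _) (hq i 1))
    _ = (∑ i, max (p i 0) (p i 1)) * s := (Finset.sum_mul _ _ _).symm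
    _ ≤ (Fintype.card ι - 1 / 2) * s :=
        mul_le_mul_of_nonneg_right (sum_max_le_card_sub_half hι hp hpadd hpsum) hs

end Scalar

lemma product_witness_le (hι : Odd (Fintype.card ι)) {m n : Type*} [Fintype m] [DecidableEq m]
    [Fintype n] {M : ι → Fin 2 → Matrix m m ℂ} {E : ι → Fin 2 → Matrix n n ℂ}
    {Es : Matrix n n ℂ} {ω : Matrix m m ℂ} {κ : Matrix n n ℂ}
    (hE : ∀ t b, (E t b).PosSemidef) (hEs : ∀ t, (1 / 2 : ℂ) • (E t 0 + E t 1) = Es)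
    (hM : ∀ t b, (M t b).PosSemidef) (hMadd : ∀ t, M t 0 + M t 1 = 1)
    (hMsum : ∀ b, (1 / Fintype.card ι : ℂ) • ∑ t, M t b = (1 / 2 : ℂ) • 1)
    (hω : IsDensity ω) (hκ : κ.PosSemidef) :
    ∑ t, ∑ b, ((M t b ⊗ₖ E t b) * (ω ⊗ₖ κ)).trace
      ≤ (2 * Fintype.card ι - 1) * ((1 ⊗ₖ Es) * (ω ⊗ₖ κ)).trace := by
  choose p hp hpM using fun t b => exists_nonneg_ofReal_eq_trace_mul (hM t b) hω.1
  choose q hq hqE using fun t b => exists_nonneg_ofReal_eq_trace_mul (hE t b) hκ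
  have hpadd (t) : p t 0 + p t 1 = 1 := by
    have h : (p t 0 + p t 1 : ℂ) = 1 := by
      rw [hpM, hpM, ← trace_add, ← Matrix.add_mul, hMadd, Matrix.one_mul, hω.2]
    exact_mod_cast h
  have hpsum (b) : ∑ t, p t b = Fintype.card ι / 2 := by
    have hcard : (Fintype.card ι : ℂ) ≠ 0 := Nat.cast_ne_zero.mpr hι.pos.ne'
    have h : (∑ t, p t b : ℂ) = Fintype.card ι / 2 := by
      simp_rw [hpM, ← trace_sum, ← Finset.sum_mul]
      have hM' : ∑ t, M t b = (Fintype.card ι : ℂ) • (1 / 2 : ℂ) • 1 :=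
        (inv_smul_eq_iff₀ hcard).mp (by rw [← hMsum b, one_div])
      rw [hM', Matrix.smul_mul, Matrix.smul_mul, Matrix.one_mul, trace_smul, trace_smul, hω.2,
        smul_eq_mul, smul_eq_mul, _root_.mul_one, mul_one_div]
    exact Complex.ofReal_injective (by push_cast; exact h)
  have hqadd (t) : (q t 0 + q t 1 : ℂ) = 2 * (Es * κ).trace := by
    rw [hqE, hqE, ← trace_add, ← Matrix.add_mul, ← hEs t, Matrix.smul_mul, trace_smul, smul_eq_mul]
    ring
  obtain ⟨t₀⟩ : Nonempty ι := Fintype.card_pos_iff.mp hι.pos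
  have hle : ∑ t, ∑ b, p t b * q t b ≤ (Fintype.card ι - 1 / 2) * (q t₀ 0 + q t₀ 1) :=
    sum_sum_mul_le hι hp hpadd hpsum hq fun t => by
      exact_mod_cast (hqadd t).trans (hqadd t₀).symm
  simp_rw [trace_kronecker_mul_kronecker, Matrix.one_mul, hω.2, _root_.one_mul, ← hpM, ← hqE]
  calc ∑ t, ∑ b, (p t b : ℂ) * (q t b : ℂ)
      ≤ (Fintype.card ι - 1 / 2) * (q t₀ 0 + q t₀ 1) := by
        have h := Complex.real_le_real.mpr hle
        push_cast at h
        exact h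
    _ = (2 * Fintype.card ι - 1) * (Es * κ).trace := by rw [hqadd]; ring

lemma Separable.witness_le (hι : Odd (Fintype.card ι)) {m n : ℕ}
    {ρ : Matrix (Fin m × Fin n) (Fin m × Fin n) ℂ} (hρ : Separable ρ)
    {M : ι → Fin 2 → Matrix (Fin m) (Fin m) ℂ} {E : ι → Fin 2 → Matrix (Fin n) (Fin n) ℂ}
    {Es : Matrix (Fin n) (Fin n) ℂ}
    (hE : ∀ t b, (E t b).PosSemidef) (hEs : ∀ t, (1 / 2 : ℂ) • (E t 0 + E t 1) = Es)
    (hM : ∀ t b, (M t b).PosSemidef) (hMadd : ∀ t, M t 0 + M t 1 = 1)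
    (hMsum : ∀ b, (1 / Fintype.card ι : ℂ) • ∑ t, M t b = (1 / 2 : ℂ) • 1) :
    ∑ t, ∑ b, ((M t b ⊗ₖ E t b) * ρ).trace
      ≤ (2 * Fintype.card ι - 1) * ((1 ⊗ₖ Es) * ρ).trace := by
  obtain ⟨L, ω, κ, hω, hκ, rfl⟩ := hρ
  simp_rw [Matrix.mul_sum, trace_sum, Finset.mul_sum]
  rw [Finset.sum_comm_cycle]
  exact Finset.sum_le_sum fun l _ =>
    product_witness_le hι hE hEs hM hMadd hMsum (hω l) (hκ l)

end SeparableBound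

section MaxEntangled

variable {d : Type*} [Fintype d] [DecidableEq d]

variable (d) in
/-- The maximally entangled state `|φ⟩⟨φ|` on `ℂ^d ⊗ ℂ^d`, where `φ = (card d)^(-1/2) ∑ i, eᵢ ⊗ eᵢ`;
the unnormalised vector `∑ i, eᵢ ⊗ eᵢ` is `vec 1`. -/
def maxEntangled : Matrix (d × d) (d × d) ℂ :=
  (Fintype.card d : ℂ)⁻¹ • vecMulVec (vec 1) (star (vec 1))

lemma trace_kronecker_mul_maxEntangled (A B : Matrix d d ℂ) :
    ((A ⊗ₖ B) * maxEntangled d).trace = (Fintype.card d : ℂ)⁻¹ * (B * Aᵀ).trace := by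
  rw [maxEntangled, Matrix.mul_smul, trace_smul, mul_vecMulVec, trace_vecMulVec, dotProduct_comm,
    star_vec_one_dotProduct_kronecker_mulVec, smul_eq_mul]

lemma isDensity_maxEntangled [Nonempty d] : IsDensity (maxEntangled d) := by
  refine ⟨(posSemidef_vecMulVec_self_star _).smul (by positivity), ?_⟩
  simpa using trace_kronecker_mul_maxEntangled (1 : Matrix d d ℂ) 1

end MaxEntangled

section TrigSums

open scoped Real

lemma sin_pi_div_natCast_ne_zero {n : ℕ} (hn : 1 < n) : Complex.sin (π / n) ≠ 0 := by
  have hsin : Real.sin (π / n) ≠ 0 :=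
    (Real.sin_pos_of_pos_of_lt_pi (by positivity)
      (div_lt_self Real.pi_pos (Nat.one_lt_cast.mpr hn))).ne'
  exact_mod_cast hsin

lemma sum_cos_two_pi_div_mul_add_eq_zero {n : ℕ} (hn : 1 < n) (z : ℂ) :
    ∑ k ∈ Finset.range n, Complex.cos (2 * π / n * k + z) = 0 := by
  have hhalf : 2 * (π : ℂ) / n / 2 = π / n := by ring
  have hfull : n * (2 * (π : ℂ) / n) / 2 = π := by field_simp
  have h := Complex.sin_mul_sum_cos n (2 * π / n) z
  rw [hhalf, hfull, Complex.sin_pi, zero_mul] at h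
  exact (mul_eq_zero.mp h).resolve_left (sin_pi_div_natCast_ne_zero hn)

lemma sum_sin_two_pi_div_mul_add_eq_zero {n : ℕ} (hn : 1 < n) (z : ℂ) :
    ∑ k ∈ Finset.range n, Complex.sin (2 * π / n * k + z) = 0 := by
  simpa only [← Complex.cos_sub_pi_div_two, add_sub_assoc] using
    sum_cos_two_pi_div_mul_add_eq_zero hn (z - π / 2)

end TrigSums

section LineProj

open scoped Real

/-- The unit vector of `ℂ²` with real direction at angle `θ`. -/
def lineVec (θ : ℝ) : Fin 2 → ℂ := ![Complex.cos θ, Complex.sin θ]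

/-- The orthogonal projection of `ℂ²` onto the line spanned by `lineVec θ`. No conjugation appears
because `lineVec θ` is a real vector. -/
def lineProj (θ : ℝ) : Matrix (Fin 2) (Fin 2) ℂ := vecMulVec (lineVec θ) (lineVec θ)

lemma star_lineVec (θ : ℝ) : star (lineVec θ) = lineVec θ := by
  ext i
  fin_cases i <;> simp [lineVec, ← Complex.cos_conj, ← Complex.sin_conj]

lemma posSemidef_lineProj (θ : ℝ) : (lineProj θ).PosSemidef := by
  simpa only [lineProj, star_lineVec] using posSemidef_vecMulVec_self_star (lineVec θ)

lemma transpose_lineProj (θ : ℝ) : (lineProj θ)ᵀ = lineProj θ :=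
  transpose_vecMulVec _ _

lemma trace_lineProj_mul_self (θ : ℝ) : (lineProj θ * lineProj θ).trace = 1 := by
  have hunit : lineVec θ ⬝ᵥ lineVec θ = 1 := by
    simp [lineVec, ← sq]
  simp [lineProj, vecMulVec_mul_vecMulVec, hunit]

lemma lineProj_eq_bloch (θ : ℝ) :
    lineProj θ = (1 / 2 : ℂ) • !![1 + Complex.cos (2 * θ), Complex.sin (2 * θ);
      Complex.sin (2 * θ), 1 - Complex.cos (2 * θ)] := by
  ext i j
  fin_cases i <;> fin_cases j <;>
    simp [lineProj, lineVec, vecMulVec_apply, Complex.cos_two_mul, Complex.sin_two_mul] <;>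
    grind [Complex.sin_sq_add_cos_sq]

lemma lineProj_add_lineProj_add_pi_div_two (θ : ℝ) :
    lineProj θ + lineProj (θ + π / 2) = 1 := by
  ext i j
  fin_cases i <;> fin_cases j <;>
    simp [lineProj, lineVec, Complex.cos_add_pi_div_two,
      Complex.sin_add_pi_div_two, ← sq, mul_comm]

lemma sum_lineProj {n : ℕ} (hn : 1 < n) (θ : ℝ) :
    ∑ k ∈ Finset.range n, lineProj (π / n * k + θ) = (n / 2 : ℂ) • 1 := by
  have hdouble (k : ℕ) :
      2 * ((π / n * k + θ : ℝ) : ℂ) = 2 * π / n * k + 2 * θ := by push_cast; ring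
  simp_rw [lineProj_eq_bloch, hdouble, ← Finset.smul_sum]
  ext i j
  fin_cases i <;> fin_cases j <;>
    simp [Matrix.sum_apply, Finset.sum_add_distrib, sum_cos_two_pi_div_mul_add_eq_zero hn,
      sum_sin_two_pi_div_mul_add_eq_zero hn, inv_mul_eq_div]

end LineProj

section RegularMeasurement

open scoped Real

/-- The `N` projective qubit measurements onto the real lines at angles `π t / N` (outcome `0`) and
their orthogonal complements (outcome `1`). The Bloch vectors of the outcomes `0` are the vertices
of a regular `N`-gon, the trine for `N = 3`. -/
def regularMeasurement (N : ℕ) (t : Fin N) (b : Fin 2) : Matrix (Fin 2) (Fin 2) ℂ :=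
  lineProj (π / N * t + b * (π / 2))

variable {N : ℕ}

lemma regularMeasurement_zero_add_one (t : Fin N) :
    regularMeasurement N t 0 + regularMeasurement N t 1 = 1 := by
  simpa [regularMeasurement] using lineProj_add_lineProj_add_pi_div_two (π / N * t)

lemma sum_regularMeasurement (hN : 1 < N) (b : Fin 2) :
    ∑ t, regularMeasurement N t b = (N / 2 : ℂ) • 1 := by
  simpa only [regularMeasurement, Finset.sum_range] using sum_lineProj hN (b * (π / 2))

lemma maxEntangled_violates_witness :
    (2 * N - 1) * ((1 ⊗ₖ ((1 / 2 : ℂ) • 1)) * maxEntangled (Fin 2)).trace <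
      ∑ t, ∑ b, ((regularMeasurement N t b ⊗ₖ regularMeasurement N t b)
        * maxEntangled (Fin 2)).trace := by
  have hone : ((1 ⊗ₖ ((1 / 2 : ℂ) • 1)) * maxEntangled (Fin 2)).trace = 1 / 2 := by
    simp [trace_kronecker_mul_maxEntangled]
  have hproj (t : Fin N) (b : Fin 2) :
      ((regularMeasurement N t b ⊗ₖ regularMeasurement N t b) * maxEntangled (Fin 2)).trace
        = 1 / 2 := by
    simp [trace_kronecker_mul_maxEntangled, regularMeasurement, transpose_lineProj,
      trace_lineProj_mul_self]
  simp_rw [hone, hproj]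
  calc (2 * N - 1) * (1 / 2) = ((N - 1 / 2 : ℝ) : ℂ) := by push_cast; ring
    _ < ((N : ℝ) : ℂ) := Complex.real_lt_real.mpr (by linarith)
    _ = ∑ _ : Fin N, ∑ _ : Fin 2, (1 / 2 : ℂ) := by simp

end RegularMeasurement

theorem exists_entangled_state_violating_witness_general {N : ℕ} (hodd : Odd N) (hN : 1 < N) :
    ∃ (m n : ℕ) (ρ : Matrix (Fin m × Fin n) (Fin m × Fin n) ℂ)
      (E : Fin N → Fin 2 → Matrix (Fin n) (Fin n) ℂ) (Es : Matrix (Fin n) (Fin n) ℂ)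
      (M : Fin N → Fin 2 → Matrix (Fin m) (Fin m) ℂ),
      IsDensity ρ ∧ ¬ Separable ρ ∧
      (∀ t b, (E t b).PosSemidef) ∧
      (∀ t, (1 / 2 : ℂ) • (E t 0 + E t 1) = Es) ∧
      (∀ t b, (M t b).PosSemidef) ∧
      (∀ t, M t 0 + M t 1 = 1) ∧
      (∀ b, (1 / N : ℂ) • ∑ t, M t b = (1 / 2 : ℂ) • (1 : Matrix (Fin m) (Fin m) ℂ)) ∧
      (2 * N - 1) * ((((1 : Matrix (Fin m) (Fin m) ℂ) ⊗ₖ Es)) * ρ).trace <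
        ∑ t, ∑ b, (((M t b) ⊗ₖ (E t b)) * ρ).trace := by
  let M := regularMeasurement N
  have hM (t b) : (M t b).PosSemidef := posSemidef_lineProj _
  have hMadd (t) : M t 0 + M t 1 = 1 := regularMeasurement_zero_add_one t
  have hEs (t) : (1 / 2 : ℂ) • (M t 0 + M t 1) = (1 / 2 : ℂ) • 1 := by rw [hMadd]
  have hMsum (b) : (1 / N : ℂ) • ∑ t, M t b = (1 / 2 : ℂ) • 1 := by
    have hN0 : (N : ℂ) ≠ 0 := Nat.cast_ne_zero.mpr (by lia)
    rw [sum_regularMeasurement hN, smul_smul]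
    congr 1
    field_simp
  refine ⟨2, 2, maxEntangled (Fin 2), M, (1 / 2 : ℂ) • 1, M, isDensity_maxEntangled,
    fun hsep => ?_, hM, hEs, hM, hMadd, hMsum, maxEntangled_violates_witness⟩
  have hle := hsep.witness_le (by simpa using hodd) hM hEs hM hMadd (by simpa using hMsum)
  rw [Fintype.card_fin] at hle
  exact hle.not_gt maxEntangled_violates_witness

theorem exists_entangled_state_violating_witness :
    ∃ (m n : ℕ) (ρ : Matrix (Fin m × Fin n) (Fin m × Fin n) ℂ)
      (E : Fin 3 → Fin 2 → Matrix (Fin n) (Fin n) ℂ) (Es : Matrix (Fin n) (Fin n) ℂ)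
      (M : Fin 3 → Fin 2 → Matrix (Fin m) (Fin m) ℂ),
      IsDensity ρ ∧ ¬ Separable ρ ∧
      (∀ t b, (E t b).PosSemidef) ∧
      (∀ t, (1 / 2 : ℂ) • (E t 0 + E t 1) = Es) ∧
      (∀ t b, (M t b).PosSemidef) ∧
      (∀ t, M t 0 + M t 1 = 1) ∧
      (∀ b, (1 / 3 : ℂ) • ∑ t, M t b = (1 / 2 : ℂ) • (1 : Matrix (Fin m) (Fin m) ℂ)) ∧
      5 * ((((1 : Matrix (Fin m) (Fin m) ℂ) ⊗ₖ Es)) * ρ).trace <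
        ∑ t, ∑ b, (((M t b) ⊗ₖ (E t b)) * ρ).trace := by
  simpa only [Nat.cast_ofNat, show (2 * 3 - 1 : ℂ) = 5 by norm_num] using
    exists_entangled_state_violating_witness_general (N := 3) (by decide) (by norm_num)
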